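/- arXiv:2605.00217 — 2 statements merged into one kernel-verified Lean document; each statement's English description precedes it below -/
import Mathlib

section
/- Let F be a field of characteristic zero, A = F[x,y], n > 1, and d²(a,b) = y^{n-1}(∂a/∂x + y·∂b/∂y) − (n−1)·y^{n-1}·b. Then A decomposes as a direct sum A = Im(d²) ⊕ (⊕_{i=0}^{n-2} y^i F[x]); i.e., every f ∈ A with all y-degree components of degree ≥ n−1 is in the image of d², and Im(d²) meets the space of polynomials of y-degree ≤ n−2 only in 0. -/
open MvPolynomial

noncomputable section

/-- `d²(a,b) = y^{n-1}(∂a/∂x + y·∂b/∂y) − (n−1)·y^{n-1}·b`. -/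
def d2 (F : Type*) [Field F] (n : ℕ)
    (p : MvPolynomial (Fin 2) F × MvPolynomial (Fin 2) F) : MvPolynomial (Fin 2) F :=
  X 1 ^ (n - 1) * (pderiv 0 p.1 + X 1 * pderiv 1 p.2) - C ((n : F) - 1) * X 1 ^ (n - 1) * p.2

theorem aux_surj (F : Type*) [Field F] [CharZero F] (g : MvPolynomial (Fin 2) F) :
    ∃ a : MvPolynomial (Fin 2) F, pderiv 0 a = g := by
  induction g using MvPolynomial.induction_on' with
  | monomial u a =>
    refine ⟨monomial (u + Finsupp.single 0 1) (a / ((u 0 : F) + 1)), ?_⟩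
    have h : (u 0 : F) + 1 ≠ 0 := Nat.cast_add_one_ne_zero _
    rw [pderiv_monomial, add_tsub_cancel_right]
    congr 1
    simp [h]
  | add p q hp hq =>
    obtain ⟨a, rfl⟩ := hp
    obtain ⟨b, rfl⟩ := hq
    exact ⟨a + b, map_add _ _ _⟩

theorem aux_im (F : Type*) [Field F] [CharZero F] (n : ℕ) (q : MvPolynomial (Fin 2) F) :
    ∃ p, d2 F n p = X 1 ^ (n - 1) * q := by
  obtain ⟨a, rfl⟩ := aux_surj F q
  exact ⟨(a, 0), by simp [d2]⟩

theorem aux_mem (F : Type*) [Field F] (n : ℕ)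
    (p : MvPolynomial (Fin 2) F × MvPolynomial (Fin 2) F) :
    ∃ q, d2 F n p = X 1 ^ (n - 1) * q :=
  ⟨pderiv 0 p.1 + X 1 * pderiv 1 p.2 - C ((n : F) - 1) * p.2, by unfold d2; ring⟩

theorem aux_zero (F : Type*) [Field F] (k : ℕ) (q : MvPolynomial (Fin 2) F)
    (h : degreeOf 1 (X 1 ^ k * q) < k) : q = 0 := by
  by_contra hq
  obtain ⟨m, hm⟩ := MvPolynomial.ne_zero_iff.1 hq
  have h1 : coeff (Finsupp.single 1 k + m) (X 1 ^ k * q) = coeff m q := by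
    rw [X_pow_eq_monomial, coeff_monomial_mul, one_mul]
  have h2 := monomial_le_degreeOf (1 : Fin 2) (mem_support_iff.2 (h1.symm ▸ hm))
  simp at h2
  omega

theorem aux_split (F : Type*) [Field F] (n : ℕ) (hn : 1 < n) (f : MvPolynomial (Fin 2) F) :
    ∃ q g, degreeOf 1 g ≤ n - 2 ∧ f = X 1 ^ (n - 1) * q + g := by
  induction f using MvPolynomial.induction_on' with
  | monomial u a =>
    by_cases h : n - 1 ≤ u 1
    · refine ⟨monomial (u - Finsupp.single 1 (n - 1)) a, 0, by simp, ?_⟩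
      rw [X_pow_eq_monomial, monomial_mul, one_mul, add_zero, add_tsub_cancel_of_le]
      simpa using h
    · refine ⟨0, monomial u a, ?_, by simp⟩
      by_cases ha : a = 0
      · simp [ha]
      · rw [degreeOf_monomial_eq _ _ ha]; omega
  | add p q hp hq =>
    obtain ⟨a, b, h1, h2⟩ := hp
    obtain ⟨c, d, h3, h4⟩ := hq
    exact ⟨a + c, b + d, (degreeOf_add_le _ _ _).trans (max_le h1 h3), by rw [h2, h4]; ring⟩

/-- `A = Im(d²) ⊕ (⊕_{i=0}^{n-2} y^i F[x])`: every `f` is uniquely the sum of an element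
of the image of `d²` and a polynomial of `y`-degree at most `n−2`; every `f` all of whose
monomials have `y`-degree ≥ `n−1` is in the image of `d²`; and the image of `d²` meets the
polynomials of `y`-degree at most `n−2` only in `0`. -/
theorem stmt8 (F : Type*) [Field F] [CharZero F] (n : ℕ) (hn : 1 < n) :
    (∀ f : MvPolynomial (Fin 2) F,
        ∃! g : MvPolynomial (Fin 2) F, degreeOf 1 g ≤ n - 2 ∧
          ∃ p : MvPolynomial (Fin 2) F × MvPolynomial (Fin 2) F, f = d2 F n p + g) ∧
    (∀ f : MvPolynomial (Fin 2) F, (∀ m ∈ f.support, n - 1 ≤ m 1) →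
        ∃ p : MvPolynomial (Fin 2) F × MvPolynomial (Fin 2) F, d2 F n p = f) ∧
    (∀ p : MvPolynomial (Fin 2) F × MvPolynomial (Fin 2) F,
        degreeOf 1 (d2 F n p) ≤ n - 2 → d2 F n p = 0) := by
  refine ⟨fun f => ?_, fun f hf => ?_, fun p hp => ?_⟩
  · obtain ⟨q, g, hg, h⟩ := aux_split F n hn f
    obtain ⟨p, hp⟩ := aux_im F n q
    refine ⟨g, ⟨hg, p, by rw [hp, h]⟩, ?_⟩
    rintro g' ⟨hg', p', hp'⟩
    obtain ⟨q', hq'⟩ := aux_mem F n p'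
    have e : X 1 ^ (n - 1) * (q - q') = g' - g := by
      rw [hq', h] at hp'
      linear_combination hp'
    have h0 : q - q' = 0 := by
      apply aux_zero F (n - 1)
      rw [e]
      have := degreeOf_sub_le (1 : Fin 2) g' g
      have := max_le hg' hg
      omega
    rw [h0, mul_zero] at e
    exact sub_eq_zero.1 e.symm
  · obtain ⟨q, g, hg, h⟩ := aux_split F n hn f
    obtain ⟨p, hp⟩ := aux_im F n q
    have h0 : g = 0 := by
      by_contra hne
      obtain ⟨m, hm⟩ := MvPolynomial.ne_zero_iff.1 hne
      have h2 := monomial_le_degreeOf (1 : Fin 2) (mem_support_iff.2 hm)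
      have h3 : coeff m f = coeff m g := by
        rw [h, coeff_add, X_pow_eq_monomial, coeff_monomial_mul', if_neg, zero_add]
        intro hle
        have := hle 1
        simp at this
        omega
      have := hf m (mem_support_iff.2 (h3.symm ▸ hm))
      omega
    exact ⟨p, by rw [hp, h, h0, add_zero]⟩
  · obtain ⟨q, hq⟩ := aux_mem F n p
    rw [hq] at hp ⊢
    rw [aux_zero F (n - 1) q (by omega), mul_zero]
end
end

section
/- Let F be a field of characteristic zero, A = F[x,y], n > 1. Consider the classical Poisson differentials D¹(f) = y^n(∂f/∂y, −∂f/∂x) and D²(f,g) = y^n(∂f/∂x + ∂g/∂y) − n·y^{n-1}·g, and the logarithmic differentials d¹(f) = (y^n·∂f/∂y, −y^{n-1}·∂f/∂x) and d²(a,b) = y^{n-1}(∂a/∂x + y·∂b/∂y) − (n−1)·y^{n-1}·b. Then the vertical maps ∂⁰ = id_A, ∂¹(f,g) = (f, g/y does not apply) — rather ∂¹(f¹, f²) = f¹·∂/∂x + f²·y·∂/∂y and the analogous identification of classical cochains — intertwine the two complexes, and in degree 2 the quotients agree: A/Im(D²) ≅ A/Im(d²) ≅ ⊕_{i=0}^{n-2}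 y^i F[x]; in particular the classical and logarithmic Poisson cohomologies of π = y^n ∂_x ∧ ∂_y are isomorphic in degree 2. -/
open MvPolynomial

noncomputable section

/-- The classical degree-2 Poisson differential `D²(f,g) = y^n(∂f/∂x + ∂g/∂y) − n·y^{n-1}·g`
of the bracket `{x,y} = y^n` (Roger–Vanhaecke). -/
def D2 (F : Type*) [Field F] (n : ℕ)
    (p : MvPolynomial (Fin 2) F × MvPolynomial (Fin 2) F) : MvPolynomial (Fin 2) F :=
  X 1 ^ n * (pderiv 0 p.1 + pderiv 1 p.2) - C (n : F) * X 1 ^ (n - 1) * p.2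

lemma aux_decomp (F : Type*) [Field F] (n : ℕ) (hn : 1 < n) (f : MvPolynomial (Fin 2) F) :
    ∃! g : MvPolynomial (Fin 2) F, degreeOf 1 g ≤ n - 2 ∧
      ∃ h : MvPolynomial (Fin 2) F, f = X 1 ^ (n - 1) * h + g := by
  have key : ∀ h : MvPolynomial (Fin 2) F, ∀ m : Fin 2 →₀ ℕ, m 1 < n - 1 →
      coeff m (X 1 ^ (n - 1) * h) = 0 := by
    intro h m hm
    rw [X_pow_eq_monomial, coeff_monomial_mul', if_neg]
    intro hle
    have := hle 1
    simp at this
    omega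
  refine ⟨modMonomial f (Finsupp.single 1 (n - 1)), ⟨?_, divMonomial f (Finsupp.single 1 (n - 1)), ?_⟩, ?_⟩
  · rw [degreeOf_le_iff]
    intro m hm
    by_contra hlt
    rw [mem_support_iff] at hm
    apply hm
    apply coeff_modMonomial_of_le
    rw [Finsupp.single_le_iff]
    omega
  · rw [X_pow_eq_monomial, divMonomial_add_modMonomial]
  · rintro g ⟨hg, h, rfl⟩
    ext m
    by_cases hm : m 1 < n - 1
    · rw [coeff_modMonomial_of_not_le, coeff_add, key h m hm, zero_add]
      rw [Finsupp.single_le_iff]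
      omega
    · rw [coeff_modMonomial_of_le]
      · by_contra hne
        rw [degreeOf_le_iff] at hg
        have := hg m (mem_support_iff.mpr hne)
        omega
      · rw [Finsupp.single_le_iff]
        omega

lemma aux_pderiv0 (F : Type*) [Field F] [CharZero F] (m : Fin 2 →₀ ℕ) (a : F) :
    pderiv 0 (monomial (m + Finsupp.single 0 1) (a / ((m 0 : F) + 1))) = monomial m a := by
  have h0 : (m 0 : F) + 1 ≠ 0 := Nat.cast_add_one_ne_zero _
  rw [pderiv_monomial]
  simp [h0]

lemma aux_D2 (F : Type*) [Field F] [CharZero F] (n : ℕ) (hn : 1 < n)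
    (h : MvPolynomial (Fin 2) F) : ∃ p, D2 F n p = X 1 ^ (n - 1) * h := by
  obtain ⟨k, rfl⟩ : ∃ k, n = k + 1 := ⟨n - 1, by omega⟩
  induction h using MvPolynomial.induction_on' with
  | add p q hp hq =>
    obtain ⟨u, hu⟩ := hp
    obtain ⟨v, hv⟩ := hq
    refine ⟨u + v, ?_⟩
    rw [mul_add, ← hu, ← hv]
    simp only [D2, Prod.fst_add, Prod.snd_add, map_add]
    ring
  | monomial m a =>
    by_cases hm : m 1 = k + 1
    · obtain ⟨m', rfl⟩ : ∃ m', m = m' + Finsupp.single 1 1 := by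
        refine ⟨m - Finsupp.single 1 1, (tsub_add_cancel_of_le ?_).symm⟩
        rw [Finsupp.single_le_iff]
        omega
      refine ⟨(monomial (m' + Finsupp.single 0 1) (a / ((m' 0 : F) + 1)), 0), ?_⟩
      simp only [D2, aux_pderiv0, map_zero]
      rw [← mul_one a, ← monomial_mul]
      change _ = _ * (_ * X 1)
      simp only [mul_one, Nat.add_sub_cancel]
      ring
    · have hc : (m 1 : F) - ((k + 1 : ℕ) : F) ≠ 0 := sub_ne_zero.mpr (by exact_mod_cast hm)
      refine ⟨(0, monomial m (a / ((m 1 : F) - ((k + 1 : ℕ) : F)))), ?_⟩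
      have e : X 1 * pderiv 1 (monomial m (a / ((m 1 : F) - ((k + 1 : ℕ) : F))))
          = C (m 1 : F) * monomial m (a / ((m 1 : F) - ((k + 1 : ℕ) : F))) := by
        rw [X_mul_pderiv_monomial, nsmul_eq_mul, map_natCast]
      have e2 : (monomial m a : MvPolynomial (Fin 2) F)
          = C ((m 1 : F) - ((k + 1 : ℕ) : F)) *
            monomial m (a / ((m 1 : F) - ((k + 1 : ℕ) : F))) := by
        rw [C_mul_monomial, mul_div_cancel₀ _ hc]
      rw [e2, C_sub, sub_mul, ← e]
      simp only [D2, map_zero, Nat.add_sub_cancel]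
      ring

lemma aux_d2 (F : Type*) [Field F] [CharZero F] (n : ℕ)
    (h : MvPolynomial (Fin 2) F) : ∃ p, d2 F n p = X 1 ^ (n - 1) * h := by
  suffices H : ∃ q, pderiv 0 q = h by
    obtain ⟨q, rfl⟩ := H
    exact ⟨(q, 0), by simp [d2]⟩
  induction h using MvPolynomial.induction_on' with
  | add p q hp hq =>
    obtain ⟨u, rfl⟩ := hp
    obtain ⟨v, rfl⟩ := hq
    exact ⟨u + v, map_add _ _ _⟩
  | monomial m a => exact ⟨_, aux_pderiv0 F m a⟩

/-- In degree 2 the classical and the logarithmic Poisson cohomology of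
`π = y^n ∂_x ∧ ∂_y` agree: `Im(D²)` and `Im(d²)` have the same complement
`⊕_{i=0}^{n-2} y^i F[x]` in `A`, i.e. every `f ∈ A` is uniquely the sum of an element of
`Im(D²)` (resp. of `Im(d²)`) and a polynomial of `y`-degree at most `n−2`; hence
`A/Im(D²) ≅ ⊕_{i=0}^{n-2} y^i F[x] ≅ A/Im(d²)`. -/
theorem stmt19 (F : Type*) [Field F] [CharZero F] (n : ℕ) (hn : 1 < n) :
    (∀ f : MvPolynomial (Fin 2) F,
        ∃! g : MvPolynomial (Fin 2) F, degreeOf 1 g ≤ n - 2 ∧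
          ∃ p : MvPolynomial (Fin 2) F × MvPolynomial (Fin 2) F, f = D2 F n p + g) ∧
    (∀ f : MvPolynomial (Fin 2) F,
        ∃! g : MvPolynomial (Fin 2) F, degreeOf 1 g ≤ n - 2 ∧
          ∃ p : MvPolynomial (Fin 2) F × MvPolynomial (Fin 2) F, f = d2 F n p + g) := by
  have E1 : ∀ f g : MvPolynomial (Fin 2) F,
      (∃ p : MvPolynomial (Fin 2) F × MvPolynomial (Fin 2) F, f = D2 F n p + g) ↔
      ∃ h : MvPolynomial (Fin 2) F, f = X 1 ^ (n - 1) * h + g := by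
    intro f g
    constructor
    · rintro ⟨p, rfl⟩
      refine ⟨X 1 * (pderiv 0 p.1 + pderiv 1 p.2) - C (n : F) * p.2, ?_⟩
      obtain ⟨k, rfl⟩ : ∃ k, n = k + 1 := ⟨n - 1, by omega⟩
      simp only [D2, Nat.add_sub_cancel]
      ring
    · rintro ⟨h, rfl⟩
      obtain ⟨p, hp⟩ := aux_D2 F n hn h
      exact ⟨p, by rw [hp]⟩
  have E2 : ∀ f g : MvPolynomial (Fin 2) F,
      (∃ p : MvPolynomial (Fin 2) F × MvPolynomial (Fin 2) F, f = d2 F n p + g) ↔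
      ∃ h : MvPolynomial (Fin 2) F, f = X 1 ^ (n - 1) * h + g := by
    intro f g
    constructor
    · rintro ⟨p, rfl⟩
      refine ⟨pderiv 0 p.1 + X 1 * pderiv 1 p.2 - C ((n : F) - 1) * p.2, ?_⟩
      simp only [d2]
      ring
    · rintro ⟨h, rfl⟩
      obtain ⟨p, hp⟩ := aux_d2 F n h
      exact ⟨p, by rw [hp]⟩
  simp only [E1, E2]
  exact ⟨aux_decomp F n hn, aux_decomp F n hn⟩
end
end
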